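/- Let J be a Jordan algebra over a field K of characteristic zero, V a finite-dimensional K-vector space, and π : J → End(V) a linear map. Equip J ⊕ V with the product (x + v)(y + w) = xy + π(x)w + π(y)v for x, y ∈ J, v, w ∈ V. Then J ⊕ V with this product is a Jordan algebra if and only if π satisfies, for all x, y ∈ J: (i) π(x²)π(x) − π(x)π(x²) = 0, and (ii) 2π(xy)π(x) + π(x²)π(y) − 2π(x)π(y)π(x) − π(x²y) = 0. -/

import Mathlib

variable {K : Type*} [Field K] [CharZero K]
variable {J : Type*} [NonUnitalNonAssocCommRing J] [Module K J]
  [SMulCommClass K J J] [IsScalarTower K J J] [FiniteDimensional K J]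
variable {V : Type*} [AddCommGroup V] [Module K V] [FiniteDimensional K V]

/-- The semi-direct product `(x + v)(y + w) = xy + π(x)w + π(y)v` on `J ⊕ V`. -/
def piMul (π : J →ₗ[K] Module.End K V) (p q : J × V) : J × V :=
  (p.1 * q.1, π p.1 q.2 + π q.1 p.2)

/-- `J ⊕ V` with the product `(x + v)(y + w) = xy + π(x)w + π(y)v` is a
Jordan algebra iff `π` satisfies (i) `π(x²)π(x) = π(x)π(x²)` and
(ii) `2π(xy)π(x) + π(x²)π(y) − 2π(x)π(y)π(x) − π(x²y) = 0`. -/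
theorem semidirect_jordan_iff_representation
    (hjordan : ∀ x y : J, (x * y) * (x * x) = x * (y * (x * x)))
    (π : J →ₗ[K] Module.End K V) :
    ((∀ p q : J × V, piMul π p q = piMul π q p) ∧
      (∀ p q : J × V,
        piMul π (piMul π p q) (piMul π p p) = piMul π p (piMul π q (piMul π p p)))) ↔
      ((∀ x : J, π (x * x) * π x - π x * π (x * x) = 0) ∧
        (∀ x y : J,
          2 • (π (x * y) * π x) + π (x * x) * π y - 2 • (π x * (π y * π x)) -
              π ((x * x) * y) = 0)) := by
  refine ⟨fun ⟨_, h⟩ => ⟨fun x => ?_, fun x y => ?_⟩, fun ⟨h₁, h₂⟩ => ⟨fun p q => ?_, ?_⟩⟩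
  · ext w
    have := congrArg Prod.snd (h (x, 0) (x, w))
    simpa [piMul, sub_eq_zero] using this
  · ext v
    have := congrArg Prod.snd (h (x, v) (y, 0))
    simp only [piMul, map_add, map_zero, zero_add, add_zero] at this
    simp only [LinearMap.sub_apply, LinearMap.add_apply,
      Module.End.mul_apply, LinearMap.zero_apply, two_smul]
    rw [this, mul_comm (x * x) y]
    abel
  · exact Prod.ext (mul_comm _ _) (add_comm _ _)
  · rintro ⟨x, v⟩ ⟨y, w⟩
    refine Prod.ext (hjordan x y) ?_
    have hw := LinearMap.congr_fun (h₁ x) w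
    have hv := LinearMap.congr_fun (h₂ x y) v
    simp only [LinearMap.sub_apply, LinearMap.add_apply,
      Module.End.mul_apply, LinearMap.zero_apply, two_smul] at hw hv
    rw [mul_comm (x * x) y] at hv
    simp only [piMul, map_add]
    rw [← sub_eq_zero, ← add_zero (0 : V)]
    nth_rewrite 1 [← hw]
    rw [← hv]
    abel
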